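/- There exists a finite directed graph G with positive arc weights such that the union S of all minimum equivalent graphs of G satisfies both: (i) some arc of the directed ultrametric backbone of G is not an arc of S, and (ii) some arc of S is not an arc of the directed ultrametric backbone of G. -/

import Mathlib

/-!
The example is the 3-cycle `0 → 1 → 2 → 0` together with the path `0 ⇄ 2 ⇄ 1`; the arc `0 → 1`
weighs 3, the detour arcs `0 → 2` and `2 → 1` weigh 2 each, and the shared arcs `1 → 2` and `2 → 0`
weigh 1. A strongly connected spanning subgraph needs `1 → 2`, the only arc out of `1`, and
`2 → 0`, the only arc into `0`. It also needs an arc out of `0` and an arc into `1`: either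
`0 → 1` serves both purposes and the subgraph contains the cycle, of weight 5, or both detour arcs
are present and it contains the path, of weight 6. So the cycle is the only minimum equivalent
graph: additive weights prefer `0 → 1` to the detour because `3 < 2 + 2`, whereas the backbone
rejects `0 → 1` because `max 2 2 < 3`, and keeps `0 → 2` as a lightest arc out of `0`.
-/

open SimpleGraph

/-- The directed ultrametric backbone of the directed graph `A` with arc weights `w`:
the arc `(i,j)` is retained iff there is no directed path from `i` to `j` all of whose
arcs have weight strictly less than `w i j`. -/
def DirUltrametricBackbone {V : Type*} (A : V → V → Prop) (w : V → V → ℝ)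
    (i j : V) : Prop :=
  A i j ∧ ¬ Relation.TransGen (fun a b => A a b ∧ w a b < w i j) i j

/-- The total arc weight of a directed graph `B` on a finite vertex type. -/
noncomputable def dirWeight {V : Type*} [Finite V] (w : V → V → ℝ)
    (B : V → V → Prop) : ℝ :=
  ∑ p ∈ {p : V × V | B p.1 p.2}.toFinite.toFinset, w p.1 p.2

/-- `B` is a minimum equivalent graph of `A`: a subgraph of `A` on the same vertex set
preserving reachability, of minimal total arc weight among all such subgraphs. -/
def IsMEG {V : Type*} [Finite V] (A : V → V → Prop) (w : V → V → ℝ)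
    (B : V → V → Prop) : Prop :=
  (∀ i j, B i j → A i j) ∧
  (∀ i j, Relation.ReflTransGen B i j ↔ Relation.ReflTransGen A i j) ∧
  ∀ B' : V → V → Prop, (∀ i j, B' i j → A i j) →
    (∀ i j, Relation.ReflTransGen B' i j ↔ Relation.ReflTransGen A i j) →
    dirWeight w B ≤ dirWeight w B'

section General

variable {V : Type*} {A B C : V → V → Prop} {w : V → V → ℝ} {i j k : V}

lemma dirUltrametricBackbone_of_forall_le (hij : A i j) (hmin : ∀ k, A i k → w i j ≤ w i k) :
    DirUltrametricBackbone A w i j := by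
  refine ⟨hij, fun hpath ↦ ?_⟩
  obtain ⟨k, ⟨hik, hlt⟩, -⟩ := Relation.TransGen.head'_iff.1 hpath
  exact (hmin k hik).not_gt hlt

lemma not_dirUltrametricBackbone_of_lt (hik : A i k) (hkj : A k j) (hwik : w i k < w i j)
    (hwkj : w k j < w i j) : ¬ DirUltrametricBackbone A w i j :=
  fun h ↦ h.2 (.head ⟨hik, hwik⟩ (.single ⟨hkj, hwkj⟩))

/-- An equivalent subgraph of the directed graph `A`: a subgraph on the same vertex set that
preserves reachability. Minimum equivalent graphs are those of least total weight. -/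
structure IsEquivalentSubgraph (A B : V → V → Prop) : Prop where
  le : B ≤ A
  reachable_iff : ∀ i j, Relation.ReflTransGen B i j ↔ Relation.ReflTransGen A i j

namespace IsEquivalentSubgraph

lemma of_forall_reachable (hBA : B ≤ A) (hB : ∀ i j, Relation.ReflTransGen B i j) :
    IsEquivalentSubgraph A B :=
  ⟨hBA, fun i j ↦ iff_of_true (hB i j) (Relation.ReflTransGen.mono hBA _ _ (hB i j))⟩

lemma exists_arc_from (hB : IsEquivalentSubgraph A B) (hij : Relation.ReflTransGen A i j)
    (hne : i ≠ j) : ∃ k, B i k := by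
  obtain rfl | ⟨k, hik, -⟩ := ((hB.reachable_iff i j).2 hij).cases_head
  · exact absurd rfl hne
  · exact ⟨k, hik⟩

lemma exists_arc_to (hB : IsEquivalentSubgraph A B) (hij : Relation.ReflTransGen A i j)
    (hne : i ≠ j) : ∃ k, B k j := by
  obtain rfl | ⟨k, -, hkj⟩ := ((hB.reachable_iff i j).2 hij).cases_tail
  · exact absurd rfl hne
  · exact ⟨k, hkj⟩

end IsEquivalentSubgraph

lemma dirWeight_eq_sum [Fintype V] [DecidableRel B] :
    dirWeight w B = ∑ i, ∑ j, if B i j then w i j else 0 := by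
  rw [dirWeight, ← Fintype.sum_prod_type' (f := fun i j ↦ if B i j then w i j else 0),
    ← Finset.sum_filter]
  congr 1
  ext p
  simp

variable [Finite V]

lemma dirWeight_mono (hCB : C ≤ B) (hw : ∀ i j, B i j → 0 ≤ w i j) :
    dirWeight w C ≤ dirWeight w B := by
  refine Finset.sum_le_sum_of_subset_of_nonneg
    (Set.Finite.toFinset_mono fun p ↦ hCB p.1 p.2) fun p hp _ ↦ hw p.1 p.2 ?_
  simpa using hp

lemma dirWeight_lt_of_lt (hCB : C < B) (hw : ∀ i j, B i j → 0 < w i j) :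
    dirWeight w C < dirWeight w B := by
  obtain ⟨i, j, hB, hC⟩ : ∃ i j, B i j ∧ ¬ C i j := by
    simpa [Pi.le_def] using hCB.not_ge
  refine Finset.sum_lt_sum_of_subset (i := (i, j))
    (Set.Finite.toFinset_mono fun p ↦ hCB.le p.1 p.2) (by simpa using hB) (by simpa using hC)
    (hw i j hB) fun p hp _ ↦ (hw p.1 p.2 ?_).le
  simpa using hp

lemma isMEG_iff : IsMEG A w B ↔ IsEquivalentSubgraph A B ∧
    ∀ C, IsEquivalentSubgraph A C → dirWeight w B ≤ dirWeight w C :=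
  ⟨fun h ↦ ⟨⟨h.1, h.2.1⟩, fun C hC ↦ h.2.2 C hC.le hC.reachable_iff⟩,
    fun h ↦ ⟨h.1.le, h.1.reachable_iff, fun C hCA hC ↦ h.2 C ⟨hCA, hC⟩⟩⟩

lemma IsMEG.eq_of_le (hB : IsMEG A w B) (hC : IsEquivalentSubgraph A C) (hCB : C ≤ B)
    (hw : ∀ i j, B i j → 0 < w i j) : C = B :=
  hCB.eq_of_not_lt fun hlt ↦ ((isMEG_iff.1 hB).2 C hC).not_gt (dirWeight_lt_of_lt hlt hw)

end General

/-- The directed cycle `0 → 1 → ⋯ → n - 1 → 0`. An abbreviation, so that it is decidable. -/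
abbrev dirCycle (n : ℕ) [NeZero n] (i j : Fin n) : Prop := j = i + 1

lemma reflTransGen_dirCycle {n : ℕ} [NeZero n] (i j : Fin n) :
    Relation.ReflTransGen (dirCycle n) i j := by
  have reach_add (m : ℕ) : Relation.ReflTransGen (dirCycle n) i (i + Fin.ofNat n m) := by
    induction m with
    | zero => simpa using .refl
    | succ m ih => exact ih.tail (Fin.ext (by simp [Fin.val_add, add_assoc]))
  simpa using reach_add (j - i).val

namespace BackboneExample

variable {B : Fin 3 → Fin 3 → Prop}

/-- The path `0 ⇄ 2 ⇄ 1`, which replaces the arc `0 → 1` of the cycle by a detour through `2`. -/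
abbrev detour (i j : Fin 3) : Prop := i ≠ j ∧ (i = 2 ∨ j = 2)

/-- The directed graph of the example. Its only missing arc is `1 → 0`. -/
abbrev arc (i j : Fin 3) : Prop := dirCycle 3 i j ∨ detour i j

/-- The arc weights of the example as natural numbers, so that comparisons between them are
decidable. The entries at `(1, 0)` and on the diagonal are dummies. -/
def natWeight : Fin 3 → Fin 3 → ℕ := ![![1, 3, 2], ![1, 1, 1], ![1, 2, 1]]

/-- The arc weights of the example as real numbers. -/
def weight (i j : Fin 3) : ℝ := natWeight i j

lemma weight_pos (i j : Fin 3) : 0 < weight i j :=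
  Nat.cast_pos.2 (by revert i j; decide)

lemma dirWeight_weight_eq_natCast [DecidableRel B] :
    dirWeight weight B = (∑ i, ∑ j, if B i j then natWeight i j else 0 : ℕ) := by
  rw [dirWeight_eq_sum]
  push_cast
  rfl

lemma dirWeight_dirCycle_lt_detour : dirWeight weight (dirCycle 3) < dirWeight weight detour := by
  rw [dirWeight_weight_eq_natCast, dirWeight_weight_eq_natCast]
  exact Nat.cast_lt.2 (by decide)

lemma isEquivalentSubgraph_dirCycle : IsEquivalentSubgraph arc (dirCycle 3) :=
  .of_forall_reachable (fun _ _ ↦ Or.inl) reflTransGen_dirCycle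

lemma dirCycle_le_or_detour_le (hB : IsEquivalentSubgraph arc B) :
    dirCycle 3 ≤ B ∨ detour ≤ B := by
  have from_one : B 1 2 := by
    obtain ⟨k, hk⟩ := hB.exists_arc_from (i := 1) (j := 2) (.single (by decide)) (by decide)
    have only_two : ∀ k, arc 1 k → k = 2 := by decide
    rwa [only_two k (hB.le _ _ hk)] at hk
  have to_zero : B 2 0 := by
    obtain ⟨k, hk⟩ := hB.exists_arc_to (i := 2) (j := 0) (.single (by decide)) (by decide)
    have only_two : ∀ k, arc k 0 → k = 2 := by decide
    rwa [only_two k (hB.le _ _ hk)] at hk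
  have from_zero : B 0 1 ∨ B 0 2 := by
    obtain ⟨k, hk⟩ := hB.exists_arc_from (i := 0) (j := 1) (.single (by decide)) (by decide)
    have one_or_two : ∀ k, arc 0 k → k = 1 ∨ k = 2 := by decide
    obtain rfl | rfl := one_or_two k (hB.le _ _ hk)
    exacts [.inl hk, .inr hk]
  have to_one : B 0 1 ∨ B 2 1 := by
    obtain ⟨k, hk⟩ := hB.exists_arc_to (i := 0) (j := 1) (.single (by decide)) (by decide)
    have zero_or_two : ∀ k, arc k 1 → k = 0 ∨ k = 2 := by decide
    obtain rfl | rfl := zero_or_two k (hB.le _ _ hk)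
    exacts [.inl hk, .inr hk]
  by_cases direct : B 0 1
  · left
    rintro i _ rfl
    fin_cases i
    exacts [direct, from_one, to_zero]
  · right
    have to_two := from_zero.resolve_left direct
    have from_two := to_one.resolve_left direct
    rintro i j ⟨hne, rfl | rfl⟩
    · fin_cases j
      exacts [to_zero, from_two, absurd rfl hne]
    · fin_cases i
      exacts [to_two, from_one, absurd rfl hne]

lemma dirWeight_dirCycle_lt_of_detour_le (hB : detour ≤ B) :
    dirWeight weight (dirCycle 3) < dirWeight weight B :=
  dirWeight_dirCycle_lt_detour.trans_le (dirWeight_mono hB fun i j _ ↦ (weight_pos i j).le)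

lemma isMEG_iff_eq_dirCycle : IsMEG arc weight B ↔ B = dirCycle 3 := by
  constructor
  · intro hB
    obtain ⟨hequiv, hmin⟩ := isMEG_iff.1 hB
    obtain hle | hle := dirCycle_le_or_detour_le hequiv
    · exact (hB.eq_of_le isEquivalentSubgraph_dirCycle hle fun i j _ ↦ weight_pos i j).symm
    · exact absurd (dirWeight_dirCycle_lt_of_detour_le hle)
        (hmin _ isEquivalentSubgraph_dirCycle).not_gt
  · rintro rfl
    refine isMEG_iff.2 ⟨isEquivalentSubgraph_dirCycle, fun C hC ↦ ?_⟩
    obtain hle | hle := dirCycle_le_or_detour_le hC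
    · exact dirWeight_mono hle fun i j _ ↦ (weight_pos i j).le
    · exact (dirWeight_dirCycle_lt_of_detour_le hle).le

lemma dirUltrametricBackbone_zero_two : DirUltrametricBackbone arc weight 0 2 := by
  refine dirUltrametricBackbone_of_forall_le (by decide) fun k hk ↦ ?_
  have natWeight_le : ∀ k, arc 0 k → natWeight 0 2 ≤ natWeight 0 k := by decide
  exact Nat.cast_le.2 (natWeight_le k hk)

lemma not_dirUltrametricBackbone_zero_one : ¬ DirUltrametricBackbone arc weight 0 1 :=
  not_dirUltrametricBackbone_of_lt (k := 2) (by decide) (by decide)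
    (Nat.cast_lt.2 (by decide)) (Nat.cast_lt.2 (by decide))

end BackboneExample

open BackboneExample

/-- There exists a finite weighted directed graph `G` such that the union `S` of all
minimum equivalent graphs of `G` (i) lacks an arc of the directed ultrametric backbone,
and (ii) has an arc that is not in the directed ultrametric backbone. -/
theorem exists_dir_backbone_ne_union_meg :
    ∃ (n : ℕ) (A : Fin n → Fin n → Prop) (w : Fin n → Fin n → ℝ),
      (∀ i, ¬ A i i) ∧ (∀ i j, A i j → 0 < w i j) ∧
      (∃ i j, DirUltrametricBackbone A w i j ∧
        ¬ ∃ B : Fin n → Fin n → Prop, IsMEG A w B ∧ B i j) ∧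
      (∃ i j, (∃ B : Fin n → Fin n → Prop, IsMEG A w B ∧ B i j) ∧
        ¬ DirUltrametricBackbone A w i j) := by
  refine ⟨3, arc, weight, by decide, fun i j _ ↦ weight_pos i j,
    ⟨0, 2, dirUltrametricBackbone_zero_two, ?_⟩,
    ⟨0, 1, ⟨dirCycle 3, isMEG_iff_eq_dirCycle.2 rfl, rfl⟩, not_dirUltrametricBackbone_zero_one⟩⟩
  rintro ⟨B, hB, h02⟩
  have hcycle : dirCycle 3 0 2 := isMEG_iff_eq_dirCycle.1 hB ▸ h02
  exact absurd hcycle (by decide)
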